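/- arXiv:math/0005054 — 5 statements merged into one kernel-verified Lean document; each statement's English description precedes it below -/
import Mathlib

section
/- Let 𝒜 be a collection of subsets of ℝⁿ, and let C be a compact subset of ℝⁿ. If for every ε > 0 there exists a packing of 𝒜 into the homothet (1+ε)C = {(1+ε)y : y ∈ C}, then there exists a packing of 𝒜 into C itself. -/
/-!
Replace `(1 + ε)C` by a closed `δ`-neighbourhood of `C`, and rigid motions by self-isometries of a
proper metric space; the two kinds of maps agree on `ℝⁿ` by the Mazur–Ulam theorem. Surjective
isometries which keep one point in a bounded set converge pointwise along any ultrafilter, and the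
inverses converge to the inverse of the limit. A single ultrafilter serves all pieces of the
collection at once, however many there are, where a diagonal sequence would need countably many.

Pointwise limits preserve packings into a closed set. The containment is clear. If the limits of
two pieces shared an interior point, it would be the limit of points lying at a fixed depth inside
the approximating pieces, so these would already overlap there. Hence the limit of packings into
smaller and smaller neighbourhoods of `C` is a packing into their intersection, which is `C`.
-/

open Pointwise

noncomputable section

/-- The rigid motion `(θ, ξ)` acting on a point of `ℝⁿ`: `x ↦ ξ + θx`. -/
def rmApply {n : ℕ} (θ : Matrix (Fin n) (Fin n) ℝ) (ξ : EuclideanSpace ℝ (Fin n))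
    (x : EuclideanSpace ℝ (Fin n)) : EuclideanSpace ℝ (Fin n) :=
  ξ + (EuclideanSpace.equiv (Fin n) ℝ).symm (θ.mulVec (EuclideanSpace.equiv (Fin n) ℝ x))

/-- `(θ, ξ)` is a packing of the family `A` into the set `C`: each `θ i` is orthogonal,
each repositioned set `σᵢ(Aᵢ)` is contained in `C`, and the repositioned sets have
pairwise disjoint interiors. -/
def IsPacking {n : ℕ} {ι : Type*} (A : ι → Set (EuclideanSpace ℝ (Fin n)))
    (θ : ι → Matrix (Fin n) (Fin n) ℝ) (ξ : ι → EuclideanSpace ℝ (Fin n))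
    (C : Set (EuclideanSpace ℝ (Fin n))) : Prop :=
  (∀ i, θ i ∈ Matrix.orthogonalGroup (Fin n) ℝ) ∧
  (∀ i, rmApply (θ i) (ξ i) '' A i ⊆ C) ∧
  Pairwise fun i j =>
    interior (rmApply (θ i) (ξ i) '' A i) ∩ interior (rmApply (θ j) (ξ j) '' A j) = ∅

/-- There exists a packing of `A` into `C`. -/
def PacksInto {n : ℕ} {ι : Type*} (A : ι → Set (EuclideanSpace ℝ (Fin n)))
    (C : Set (EuclideanSpace ℝ (Fin n))) : Prop :=
  ∃ θ ξ, IsPacking A θ ξ C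

open Filter Metric Topology

section IsometryLimits

variable {α X Y : Type*}

lemma exists_tendsto_apply_of_dist_le [PseudoMetricSpace X] [PseudoMetricSpace Y] [ProperSpace Y]
    {U : Ultrafilter α} {e : α → X ≃ᵢ Y} {a : X} {b : Y} {r : ℝ}
    (hr : ∀ᶠ k in U, dist (e k a) b ≤ r) (x : X) :
    ∃ y, Tendsto (fun k => e k x) U (𝓝 y) := by
  have hx : ∀ᶠ k in U, e k x ∈ closedBall b (dist x a + r) := by
    filter_upwards [hr] with k hk
    calc dist (e k x) b ≤ dist (e k x) (e k a) + dist (e k a) b := dist_triangle _ _ _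
      _ ≤ dist x a + r := by rw [(e k).dist_eq]; gcongr
  obtain ⟨y, -, hy⟩ := (isCompact_closedBall b _).ultrafilter_le_nhds (U.map fun k => e k x)
    (le_principal_iff.2 hx)
  exact ⟨y, hy⟩

theorem exists_isometryEquiv_tendsto [MetricSpace X] [ProperSpace X] [MetricSpace Y]
    [ProperSpace Y] {U : Ultrafilter α} {e : α → X ≃ᵢ Y} {a : X} {b : Y} {r : ℝ}
    (hr : ∀ᶠ k in U, dist (e k a) b ≤ r) :
    ∃ g : X ≃ᵢ Y, ∀ x, Tendsto (fun k => e k x) U (𝓝 (g x)) := by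
  have hr_symm : ∀ᶠ k in U, dist ((e k).symm b) a ≤ r := by
    filter_upwards [hr] with k hk
    rwa [← (e k).dist_eq, (e k).apply_symm_apply, dist_comm]
  choose g hg using exists_tendsto_apply_of_dist_le hr
  choose g' hg' using exists_tendsto_apply_of_dist_le hr_symm
  have g_isometry : Isometry g := Isometry.of_dist_eq fun x x' =>
    tendsto_nhds_unique ((hg x).dist (hg x')) (by simp only [(e _).dist_eq, tendsto_const_nhds])
  have g_g' (y : Y) : g (g' y) = y := by
    refine tendsto_nhds_unique (hg (g' y)) (tendsto_iff_dist_tendsto_zero.2 ?_)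
    have dist_eq (k : α) : dist (e k (g' y)) y = dist ((e k).symm y) (g' y) := by
      rw [← (e k).dist_eq, (e k).apply_symm_apply, dist_comm]
    simpa only [dist_eq] using tendsto_iff_dist_tendsto_zero.1 (hg' y)
  exact ⟨IsometryEquiv.mk' g g' g_g' g_isometry, hg⟩

lemma eventually_mem_interior_image_of_tendsto [PseudoMetricSpace X] [PseudoMetricSpace Y]
    {l : Filter α} {e : α → X ≃ᵢ Y} {g : X ≃ᵢ Y}
    (hlim : ∀ x, Tendsto (fun k => e k x) l (𝓝 (g x))) {s : Set X} {p : Y}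
    (hp : p ∈ interior (g '' s)) : ∀ᶠ k in l, p ∈ interior (e k '' s) := by
  obtain ⟨x, hx, rfl⟩ : p ∈ g '' interior s := (g.toHomeomorph.image_interior s).symm ▸ hp
  obtain ⟨r, hr, ball_subset⟩ := Metric.mem_nhds_iff.1 (mem_interior_iff_mem_nhds.1 hx)
  filter_upwards [(hlim x).eventually (ball_mem_nhds (g x) hr)] with k hk
  refine interior_maximal (Set.image_mono ball_subset) ?_ ?_
  · exact (e k).toHomeomorph.isOpenMap _ isOpen_ball
  · rw [(e k).image_ball]
    exact mem_ball_comm.1 hk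

end IsometryLimits

section IsometricPacking

variable {ι X : Type*}

/-- The metric-space form of `IsPacking`: the self-isometries `σ i` of `X` move the sets `A i` into
`C`, with pairwise disjoint interiors. Isometries are required to be surjective, as rigid motions
are. -/
structure IsIsometricPacking [PseudoEMetricSpace X] (A : ι → Set X) (σ : ι → X ≃ᵢ X)
    (C : Set X) : Prop where
  image_subset : ∀ i, σ i '' A i ⊆ C
  disjoint_interior : Pairwise fun i j => Disjoint (interior (σ i '' A i)) (interior (σ j '' A j))

namespace IsIsometricPacking

variable {A : ι → Set X} {C D : Set X}

lemma mono [PseudoEMetricSpace X] {σ : ι → X ≃ᵢ X} (h : IsIsometricPacking A σ C) (hCD : C ⊆ D) :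
    IsIsometricPacking A σ D :=
  ⟨fun i => (h.image_subset i).trans hCD, h.disjoint_interior⟩

theorem of_tendsto [PseudoMetricSpace X] {α : Type*} {l : Filter α} [l.NeBot]
    {σ : α → ι → X ≃ᵢ X} {τ : ι → X ≃ᵢ X} (hC : IsClosed C)
    (hσ : ∀ᶠ k in l, IsIsometricPacking A (σ k) C)
    (hlim : ∀ i, (A i).Nonempty → ∀ x, Tendsto (fun k => σ k i x) l (𝓝 (τ i x))) :
    IsIsometricPacking A τ C where
  image_subset := by
    rintro i _ ⟨a, ha, rfl⟩
    exact hC.mem_of_tendsto (hlim i ⟨a, ha⟩ a)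
      (hσ.mono fun k hk => hk.image_subset i (Set.mem_image_of_mem _ ha))
  disjoint_interior i j hij := by
    refine Set.disjoint_left.2 fun p hpi hpj => ?_
    have eventually_mem {m : ι} (hp : p ∈ interior (τ m '' A m)) :
        ∀ᶠ k in l, p ∈ interior (σ k m '' A m) :=
      eventually_mem_interior_image_of_tendsto
        (hlim m (Set.image_nonempty.1 ⟨p, interior_subset hp⟩)) hp
    obtain ⟨k, hk, hki, hkj⟩ :=
      (hσ.and ((eventually_mem hpi).and (eventually_mem hpj))).exists
    exact Set.disjoint_left.1 (hk.disjoint_interior hij) hki hkj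

lemma exists_tendsto [MetricSpace X] [ProperSpace X] {α : Type*} {U : Ultrafilter α}
    {σ : α → ι → X ≃ᵢ X} (hC : Bornology.IsBounded C)
    (hσ : ∀ᶠ k in U, IsIsometricPacking A (σ k) C) :
    ∃ τ : ι → X ≃ᵢ X, ∀ i, (A i).Nonempty → ∀ x, Tendsto (fun k => σ k i x) U (𝓝 (τ i x)) := by
  have exists_limit (i : ι) : ∃ g : X ≃ᵢ X,
      (A i).Nonempty → ∀ x, Tendsto (fun k => σ k i x) U (𝓝 (g x)) := by
    rcases (A i).eq_empty_or_nonempty with hempty | ⟨a, ha⟩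
    · exact ⟨IsometryEquiv.refl X, fun hne => absurd hempty hne.ne_empty⟩
    · obtain ⟨r, hr⟩ := hC.subset_closedBall a
      have hdist : ∀ᶠ k in U, dist (σ k i a) a ≤ r :=
        hσ.mono fun k hk => hr (hk.image_subset i (Set.mem_image_of_mem _ ha))
      exact (exists_isometryEquiv_tendsto hdist).imp fun _ hg _ => hg
  choose τ hτ using exists_limit
  exact ⟨τ, hτ⟩

end IsIsometricPacking

theorem packing_of_homothets_general [MetricSpace X] [ProperSpace X] {A : ι → Set X} {C : Set X}
    (hC : IsCompact C) (h : ∀ δ : ℝ, 0 < δ → ∃ σ, IsIsometricPacking A σ (cthickening δ C)) :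
    ∃ σ, IsIsometricPacking A σ C := by
  choose σ hσ using fun k : ℕ => h (1 / ((k : ℝ) + 1)) Nat.one_div_pos_of_nat
  have eventually_packing (δ : ℝ) (hδ : 0 < δ) :
      ∀ᶠ k in (hyperfilter ℕ : Filter ℕ), IsIsometricPacking A (σ k) (cthickening δ C) :=
    ((tendsto_one_div_add_atTop_nhds_zero_nat.eventually_le_const hδ).filter_mono
      Nat.hyperfilter_le_atTop).mono fun k hk => (hσ k).mono (cthickening_mono hk C)
  obtain ⟨τ, hτ⟩ := IsIsometricPacking.exists_tendsto hC.isBounded.cthickening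
    (eventually_packing 1 one_pos)
  have packing_cthickening (δ : ℝ) (hδ : 0 < δ) : IsIsometricPacking A τ (cthickening δ C) :=
    .of_tendsto isClosed_cthickening (eventually_packing δ hδ) hτ
  refine ⟨τ, fun i => ?_, (packing_cthickening 1 one_pos).disjoint_interior⟩
  rw [← hC.isClosed.closure_eq, closure_eq_iInter_cthickening]
  exact Set.subset_iInter₂ fun δ hδ => (packing_cthickening δ hδ).image_subset i

end IsometricPacking

section RigidMotions

variable {n : ℕ}

lemma exists_isometryEquiv_eq_rmApply {θ : Matrix (Fin n) (Fin n) ℝ}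
    (hθ : θ ∈ Matrix.orthogonalGroup (Fin n) ℝ) (ξ : EuclideanSpace ℝ (Fin n)) :
    ∃ e : EuclideanSpace ℝ (Fin n) ≃ᵢ EuclideanSpace ℝ (Fin n), ⇑e = rmApply θ ξ := by
  have hu : Matrix.toEuclideanCLM (n := Fin n) (𝕜 := ℝ) θ ∈ unitary _ := Unitary.map_mem _ hθ
  exact ⟨(Unitary.linearIsometryEquiv ⟨_, hu⟩).toIsometryEquiv.trans (.addLeft ξ), rfl⟩

lemma exists_rmApply_eq_isometryEquiv
    (e : EuclideanSpace ℝ (Fin n) ≃ᵢ EuclideanSpace ℝ (Fin n)) :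
    ∃ θ ∈ Matrix.orthogonalGroup (Fin n) ℝ, ∃ ξ, rmApply θ ξ = e := by
  let toCLM := Matrix.toEuclideanCLM (n := Fin n) (𝕜 := ℝ)
  let u := Unitary.linearIsometryEquiv.symm e.toRealLinearIsometryEquiv
  refine ⟨toCLM.symm u, Unitary.map_mem toCLM.symm u.2, e 0, funext fun x => ?_⟩
  calc rmApply (toCLM.symm u) (e 0) x = e 0 + toCLM (toCLM.symm u) x := rfl
    _ = e 0 + e.toRealLinearIsometryEquiv x := by rw [toCLM.apply_symm_apply]; rfl
    _ = e x := by rw [e.toRealLinearIsometryEquiv_apply, add_sub_cancel]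

theorem packsInto_iff_exists_isIsometricPacking {ι : Type*}
    {A : ι → Set (EuclideanSpace ℝ (Fin n))} {C : Set (EuclideanSpace ℝ (Fin n))} :
    PacksInto A C ↔ ∃ σ, IsIsometricPacking A σ C := by
  constructor
  · rintro ⟨θ, ξ, hθ, image_subset, inter_eq_empty⟩
    choose σ hσ using fun i => exists_isometryEquiv_eq_rmApply (hθ i) (ξ i)
    simp only [← hσ, ← Set.disjoint_iff_inter_eq_empty] at image_subset inter_eq_empty
    exact ⟨σ, image_subset, inter_eq_empty⟩
  · rintro ⟨σ, image_subset, disjoint_interior⟩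
    choose θ hθ ξ hξ using fun i => exists_rmApply_eq_isometryEquiv (σ i)
    simp only [← hξ, Set.disjoint_iff_inter_eq_empty] at image_subset disjoint_interior
    exact ⟨θ, ξ, hθ, image_subset, disjoint_interior⟩

end RigidMotions

lemma exists_pos_one_add_smul_subset_cthickening {E : Type*} [SeminormedAddCommGroup E]
    [NormedSpace ℝ E] {C : Set E} (hC : Bornology.IsBounded C) {δ : ℝ} (hδ : 0 < δ) :
    ∃ ε : ℝ, 0 < ε ∧ (1 + ε) • C ⊆ cthickening δ C := by
  obtain ⟨M, hM, norm_le⟩ := hC.exists_pos_norm_le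
  refine ⟨δ / M, div_pos hδ hM, ?_⟩
  rintro _ ⟨c, hc, rfl⟩
  refine mem_cthickening_of_dist_le _ c δ C hc ?_
  calc dist ((1 + δ / M) • c) c = ‖(δ / M) • c‖ := by
        rw [dist_eq_norm, add_smul, one_smul, add_sub_cancel_left]
    _ = δ / M * ‖c‖ := norm_smul_of_nonneg (by positivity) c
    _ ≤ δ / M * M := by gcongr; exact norm_le c hc
    _ = δ := div_mul_cancel₀ δ hM.ne'

/-- **Theorem 1 (first part).** If `C ⊆ ℝⁿ` is compact and for every `ε > 0` the collection
`A` can be packed into the homothet `(1+ε)C`, then `A` can be packed into `C` itself. -/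
theorem packing_of_homothets {n : ℕ} {ι : Type*} (A : ι → Set (EuclideanSpace ℝ (Fin n)))
    (C : Set (EuclideanSpace ℝ (Fin n))) (hC : IsCompact C)
    (h : ∀ ε : ℝ, 0 < ε → PacksInto A ((1 + ε) • C)) :
    PacksInto A C := by
  refine packsInto_iff_exists_isIsometricPacking.2 (packing_of_homothets_general hC fun δ hδ => ?_)
  obtain ⟨ε, hε, hsub⟩ := exists_pos_one_add_smul_subset_cthickening hC.isBounded hδ
  exact (packsInto_iff_exists_isIsometricPacking.1 (h ε hε)).imp fun _ hσ => hσ.mono hsub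
end
end

section
/- Let 𝒜 be a collection of subsets of ℝⁿ and R > 0. If for every ε > 0 there exists a packing of 𝒜 into a closed ball of radius R + ε in ℝⁿ, then there exists a packing of 𝒜 into a closed ball of radius R. -/
/-!
A rigid motion sending a given point into a compact set ranges over a compact set, because the
orthogonal group is compact. By Tychonoff's theorem the packings of a family of nonempty sets into
a compact set therefore form a compact space, once we know that they form a closed set of families
of motions. The disjointness of interiors is closed in the motions because rigid motions are
homeomorphisms: an overlap of `σᵢ Aᵢ` and `σⱼ Aⱼ` means that `σⱼ⁻¹ σᵢ x` is interior to `Aⱼ` for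
some `x` interior to `Aᵢ`, and this persists under small changes of `σᵢ` and `σⱼ`.

After translations, the packings into the closed `ε`-thickenings of a compact set `K` (for a ball,
the balls of radius `R + ε`) are thus a decreasing family of nonempty compact sets, and a point of
their intersection is a packing into `K`. Empty members of the family leave their motions
unconstrained and are set aside first.
-/

open Pointwise

noncomputable section

open Metric Set

section RigidMotion

variable {n : ℕ} {θ : Matrix (Fin n) (Fin n) ℝ}

/-- The map `z ↦ θᵀ(z - ξ)`, which for orthogonal `θ` is the inverse of the rigid motion `(θ, ξ)`.
It is defined for all matrices `θ` so that it depends continuously on `θ` and `ξ`. -/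
def rmInv (θ : Matrix (Fin n) (Fin n) ℝ) (ξ z : EuclideanSpace ℝ (Fin n)) :
    EuclideanSpace ℝ (Fin n) :=
  rmApply θ.transpose 0 (z - ξ)

section Continuity

variable {X : Type*} [TopologicalSpace X] {Θ : X → Matrix (Fin n) (Fin n) ℝ}
  {ξ x : X → EuclideanSpace ℝ (Fin n)}

@[fun_prop]
lemma continuous_rmApply (hΘ : Continuous Θ) (hξ : Continuous ξ) (hx : Continuous x) :
    Continuous fun t => rmApply (Θ t) (ξ t) (x t) := by
  unfold rmApply
  fun_prop

@[fun_prop]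
lemma continuous_rmInv (hΘ : Continuous Θ) (hξ : Continuous ξ) (hx : Continuous x) :
    Continuous fun t => rmInv (Θ t) (ξ t) (x t) := by
  unfold rmInv
  fun_prop

end Continuity

lemma rmInv_rmApply (hθ : θ ∈ Matrix.orthogonalGroup (Fin n) ℝ)
    (ξ x : EuclideanSpace ℝ (Fin n)) : rmInv θ ξ (rmApply θ ξ x) = x := by
  simp only [rmInv, rmApply, zero_add, add_sub_cancel_left, ContinuousLinearEquiv.apply_symm_apply,
    Matrix.mulVec_mulVec, (Matrix.mem_orthogonalGroup_iff' (Fin n) ℝ).1 hθ, Matrix.one_mulVec,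
    ContinuousLinearEquiv.symm_apply_apply]

lemma rmApply_rmInv (hθ : θ ∈ Matrix.orthogonalGroup (Fin n) ℝ)
    (ξ z : EuclideanSpace ℝ (Fin n)) : rmApply θ ξ (rmInv θ ξ z) = z := by
  simp only [rmInv, rmApply, zero_add, ContinuousLinearEquiv.apply_symm_apply, Matrix.mulVec_mulVec,
    (Matrix.mem_orthogonalGroup_iff (Fin n) ℝ).1 hθ, Matrix.one_mulVec,
    ContinuousLinearEquiv.symm_apply_apply, add_sub_cancel]

/-- A rigid motion of `ℝⁿ` as a homeomorphism. -/
def rmHomeomorph (hθ : θ ∈ Matrix.orthogonalGroup (Fin n) ℝ) (ξ : EuclideanSpace ℝ (Fin n)) :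
    EuclideanSpace ℝ (Fin n) ≃ₜ EuclideanSpace ℝ (Fin n) where
  toFun := rmApply θ ξ
  invFun := rmInv θ ξ
  left_inv := rmInv_rmApply hθ ξ
  right_inv := rmApply_rmInv hθ ξ
  continuous_toFun := by fun_prop
  continuous_invFun := by fun_prop

lemma interior_rmApply_image (hθ : θ ∈ Matrix.orthogonalGroup (Fin n) ℝ)
    (ξ : EuclideanSpace ℝ (Fin n)) (S : Set (EuclideanSpace ℝ (Fin n))) :
    interior (rmApply θ ξ '' S) = rmApply θ ξ '' interior S :=
  ((rmHomeomorph hθ ξ).image_interior S).symm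

lemma mem_rmApply_image_iff (hθ : θ ∈ Matrix.orthogonalGroup (Fin n) ℝ)
    {ξ z : EuclideanSpace ℝ (Fin n)} {S : Set (EuclideanSpace ℝ (Fin n))} :
    z ∈ rmApply θ ξ '' S ↔ rmInv θ ξ z ∈ S :=
  Set.ext_iff.1 ((rmHomeomorph hθ ξ).image_eq_preimage_symm S) z

lemma rmApply_vadd_image (θ : Matrix (Fin n) (Fin n) ℝ) (c ξ : EuclideanSpace ℝ (Fin n))
    (S : Set (EuclideanSpace ℝ (Fin n))) :
    rmApply θ (c +ᵥ ξ) '' S = c +ᵥ rmApply θ ξ '' S := by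
  rw [← image_vadd, image_image]
  exact image_congr fun x _ => add_assoc c ξ _

end RigidMotion

lemma isCompact_unitaryGroup (m 𝕜 : Type*) [Fintype m] [DecidableEq m] [RCLike 𝕜] :
    IsCompact (Matrix.unitaryGroup m 𝕜 : Set (Matrix m m 𝕜)) := by
  have entries : IsCompact (univ.pi fun _ : m => univ.pi fun _ : m => closedBall (0 : 𝕜) 1) :=
    isCompact_univ_pi fun _ => isCompact_univ_pi fun _ => isCompact_closedBall 0 1
  have closed : IsClosed (Matrix.unitaryGroup m 𝕜 : Set (Matrix m m 𝕜)) := isClosed_unitary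
  refine entries.of_isClosed_subset closed fun M hM i _ j _ => ?_
  exact mem_closedBall_zero_iff.2 (entry_norm_bound_of_unitary hM i j)

section Packing

variable {n : ℕ} {ι : Type*} {A : ι → Set (EuclideanSpace ℝ (Fin n))}
  {θ : ι → Matrix (Fin n) (Fin n) ℝ} {ξ : ι → EuclideanSpace ℝ (Fin n)}
  {C D : Set (EuclideanSpace ℝ (Fin n))}

lemma IsPacking.mono (h : IsPacking A θ ξ C) (hCD : C ⊆ D) : IsPacking A θ ξ D :=
  ⟨h.1, fun i => (h.2.1 i).trans hCD, h.2.2⟩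

lemma IsPacking.iInter {κ : Type*} [Nonempty κ] {C : κ → Set (EuclideanSpace ℝ (Fin n))}
    (h : ∀ k, IsPacking A θ ξ (C k)) : IsPacking A θ ξ (⋂ k, C k) :=
  have ⟨hθ, _, hdisj⟩ := h (Classical.arbitrary κ)
  ⟨hθ, fun i => subset_iInter fun k => (h k).2.1 i, hdisj⟩

lemma IsPacking.vadd (h : IsPacking A θ ξ C) (c : EuclideanSpace ℝ (Fin n)) :
    IsPacking A θ (fun i => c +ᵥ ξ i) (c +ᵥ C) := by
  obtain ⟨hθ, hsub, hdisj⟩ := h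
  refine ⟨hθ, fun i => ?_, fun i j hij => ?_⟩
  · rw [rmApply_vadd_image]
    exact vadd_set_mono (hsub i)
  · simp only [rmApply_vadd_image, interior_vadd, ← vadd_set_inter, hdisj hij, vadd_set_empty]

lemma PacksInto.vadd (h : PacksInto A C) (c : EuclideanSpace ℝ (Fin n)) :
    PacksInto A (c +ᵥ C) :=
  have ⟨θ, _, hp⟩ := h
  ⟨θ, _, hp.vadd c⟩

lemma PacksInto.comp_injective {κ : Type*} {f : κ → ι} (h : PacksInto A C)
    (hf : Function.Injective f) : PacksInto (A ∘ f) C :=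
  have ⟨θ, ξ, hθ, hsub, hdisj⟩ := h
  ⟨θ ∘ f, ξ ∘ f, fun k => hθ (f k), fun k => hsub (f k), fun _ _ hkl => hdisj (hf.ne hkl)⟩

lemma PacksInto.of_comp_injective {κ : Type*} {f : κ → ι} (hf : Function.Injective f)
    (hA : ∀ i ∉ range f, A i = ∅) (h : PacksInto (A ∘ f) C) : PacksInto A C := by
  obtain ⟨θ, ξ, hθ, hsub, hdisj⟩ := h
  refine ⟨Function.extend f θ 1, Function.extend f ξ 0, fun i => ?_, fun i => ?_, fun i j hij => ?_⟩
  · by_cases hi : i ∈ range f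
    · obtain ⟨k, rfl⟩ := hi
      rw [hf.extend_apply]
      exact hθ k
    · rw [Function.extend_apply' _ _ _ hi]
      exact one_mem _
  · by_cases hi : i ∈ range f
    · obtain ⟨k, rfl⟩ := hi
      rw [hf.extend_apply, hf.extend_apply]
      exact hsub k
    · simp [hA i hi]
  · by_cases hi : i ∈ range f
    · by_cases hj : j ∈ range f
      · obtain ⟨⟨k, rfl⟩, ⟨l, rfl⟩⟩ := hi, hj
        simp only [hf.extend_apply]
        exact hdisj (ne_of_apply_ne f hij)
      · simp [hA j hj]
    · simp [hA i hi]

/-- The set of all packings of `A` into `C`, inside the product over `i` of the spaces of pairs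
`(θ i, ξ i)`. -/
def packings (A : ι → Set (EuclideanSpace ℝ (Fin n))) (C : Set (EuclideanSpace ℝ (Fin n))) :
    Set (ι → Matrix (Fin n) (Fin n) ℝ × EuclideanSpace ℝ (Fin n)) :=
  {p | IsPacking A (fun i => (p i).1) (fun i => (p i).2) C}

lemma packings_nonempty_iff : (packings A C).Nonempty ↔ PacksInto A C :=
  ⟨fun ⟨_, hp⟩ => ⟨_, _, hp⟩, fun ⟨θ, ξ, hp⟩ => ⟨fun i => (θ i, ξ i), hp⟩⟩

lemma packings_mono (hCD : C ⊆ D) : packings A C ⊆ packings A D :=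
  fun _ hp => IsPacking.mono hp hCD

-- Asking that `σⱼ⁻¹ (σᵢ x)` avoid `interior (A j)` is a closed condition on `(σᵢ, σⱼ)`.
lemma isPacking_iff_rmInv_notMem : IsPacking A θ ξ C ↔
    (∀ i, θ i ∈ Matrix.orthogonalGroup (Fin n) ℝ) ∧
    (∀ i, ∀ x ∈ A i, rmApply (θ i) (ξ i) x ∈ C) ∧
    ∀ i j, i ≠ j → ∀ x ∈ interior (A i),
      rmInv (θ j) (ξ j) (rmApply (θ i) (ξ i) x) ∉ interior (A j) := by
  refine and_congr_right fun hθ => and_congr (by simp only [image_subset_iff]; rfl) ?_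
  refine forall₃_congr fun i j _ => ?_
  beta_reduce
  rw [← disjoint_iff_inter_eq_empty, interior_rmApply_image (hθ i), interior_rmApply_image (hθ j),
    disjoint_left, forall_mem_image]
  simp only [mem_rmApply_image_iff (hθ j)]

lemma isClosed_packings (hC : IsClosed C) : IsClosed (packings A C) := by
  simp only [packings, isPacking_iff_rmInv_notMem, ofPred_and, ofPred_forall]
  refine .inter (isClosed_iInter fun i => ?orthogonal) (.inter
    (isClosed_iInter fun i => isClosed_iInter fun x => isClosed_iInter fun _ => ?contained)
    (isClosed_iInter fun i => isClosed_iInter fun j => isClosed_iInter fun _ =>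
      isClosed_iInter fun x => isClosed_iInter fun _ => ?disjoint))
  case orthogonal => exact isClosed_unitary.preimage (by fun_prop)
  case contained => exact hC.preimage (by fun_prop)
  case disjoint => exact isOpen_interior.isClosed_compl.preimage (by fun_prop)

-- A rigid motion is determined by its orthogonal part and its value at one point.
lemma isCompact_setOf_rmApply_mem (hC : IsCompact C) (a : EuclideanSpace ℝ (Fin n)) :
    IsCompact {q : Matrix (Fin n) (Fin n) ℝ × EuclideanSpace ℝ (Fin n) |
      q.1 ∈ Matrix.orthogonalGroup (Fin n) ℝ ∧ rmApply q.1 q.2 a ∈ C} := by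
  have hK := ((isCompact_unitaryGroup (Fin n) ℝ).prod hC).image
    (f := fun q => (q.1, q.2 - rmApply q.1 0 a)) (by fun_prop)
  refine hK.of_isClosed_subset ?_ fun q hq => ⟨(q.1, rmApply q.1 q.2 a), hq, ?_⟩
  · exact (isClosed_unitary.preimage continuous_fst).inter (hC.isClosed.preimage (by fun_prop))
  · simp [rmApply]

lemma isCompact_packings (hA : ∀ i, (A i).Nonempty) (hC : IsCompact C) :
    IsCompact (packings A C) := by
  choose a ha using hA
  refine (isCompact_univ_pi fun i => isCompact_setOf_rmApply_mem hC (a i)).of_isClosed_subset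
    (isClosed_packings hC.isClosed) fun p hp i _ => ?_
  exact ⟨hp.1 i, hp.2.1 i ⟨a i, ha i, rfl⟩⟩

lemma packsInto_iInter_of_directed {κ : Type*} [Nonempty κ]
    {C : κ → Set (EuclideanSpace ℝ (Fin n))} (hdir : Directed (· ⊇ ·) C)
    (hC : ∀ k, IsCompact (C k)) (h : ∀ k, PacksInto A (C k)) : PacksInto A (⋂ k, C k) := by
  have hempty : ∀ i ∉ range (Subtype.val : {i // (A i).Nonempty} → ι), A i = ∅ := by
    simp [not_nonempty_iff_eq_empty]
  refine .of_comp_injective Subtype.val_injective hempty ?_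
  have hcompact k := isCompact_packings (fun i : {i // (A i).Nonempty} => i.2) (hC k)
  obtain ⟨p, hp⟩ := IsCompact.nonempty_iInter_of_directed_nonempty_isCompact_isClosed _
    (hdir.mono_comp _ fun _ _ hCD => packings_mono hCD)
    (fun k => packings_nonempty_iff.2 ((h k).comp_injective Subtype.val_injective))
    hcompact (fun k => (hcompact k).isClosed)
  exact ⟨_, _, IsPacking.iInter fun k => mem_iInter.1 hp k⟩

end Packing

theorem packing_of_balls_general {n : ℕ} {ι : Type*} {A : ι → Set (EuclideanSpace ℝ (Fin n))}
    {K : Set (EuclideanSpace ℝ (Fin n))} (hK : IsCompact K)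
    (h : ∀ ε : ℝ, 0 < ε → ∃ c : EuclideanSpace ℝ (Fin n), PacksInto A (c +ᵥ cthickening ε K)) :
    PacksInto A K := by
  have centred : ∀ ε : Ioi (0 : ℝ), PacksInto A (cthickening ε K) := fun ε => by
    obtain ⟨c, hc⟩ := h ε ε.2
    simpa only [neg_vadd_vadd] using hc.vadd (-c)
  have hdir : Directed (· ⊇ ·) fun ε : Ioi (0 : ℝ) => cthickening (ε : ℝ) K :=
    Monotone.directed_ge fun _ _ hεδ => cthickening_mono hεδ K
  have hK_eq : K = ⋂ ε : Ioi (0 : ℝ), cthickening ε K := by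
    rw [iInter_coe_set]
    exact hK.isClosed.closure_eq.symm.trans (closure_eq_iInter_cthickening K)
  rw [hK_eq]
  exact packsInto_iInter_of_directed hdir (fun _ => hK.cthickening) centred

/-- **Theorem 1 (second part).** If for every `ε > 0` there exists a packing of `A` into
some closed ball of radius `R + ε` in `ℝⁿ`, then there exists a packing of `A` into a
closed ball of radius `R`. -/
theorem packing_of_balls {n : ℕ} {ι : Type*} (A : ι → Set (EuclideanSpace ℝ (Fin n)))
    (R : ℝ) (hR : 0 < R)
    (h : ∀ ε : ℝ, 0 < ε → ∃ c : EuclideanSpace ℝ (Fin n),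
      PacksInto A (Metric.closedBall c (R + ε))) :
    ∃ c : EuclideanSpace ℝ (Fin n), PacksInto A (Metric.closedBall c R) := by
  refine ⟨0, packing_of_balls_general (isCompact_closedBall 0 R) fun ε hε => ?_⟩
  simpa [cthickening_closedBall hε.le hR.le, vadd_closedBall, add_comm] using h ε hε
end
end

section
/- Let 𝒜 be a collection of subsets of ℝⁿ, and let C be a compact subset of ℝⁿ. If for every ε > 0 there exists a translated packing of 𝒜 into the homothet (1+ε)C = {(1+ε)y : y ∈ C}, then there exists a translated packing of 𝒜 into C itself. -/
/-!
The scalars `r` for which `A` packs into `r • C` form a closed set. To see this, let `r` converge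
to `r₀` along an ultrafilter. If `Aᵢ` is nonempty, compactness of `C` makes the translation vectors
`ξᵢ(r)` converge; a single ultrafilter serves all indices at once, so the index type is arbitrary.
Inclusion passes to the limit because limits of points of `r • C` lie in `r₀ • C`, and disjointness
of interiors because a point common to two limiting interiors lies in both interiors for some
earlier `r`.
-/

open Pointwise

noncomputable section

/-- `ξ` is a translated packing of the family `A` into the set `C`: each translated set
`ξᵢ + Aᵢ` is contained in `C`, and the translated sets have pairwise disjoint interiors. -/
def IsTransPacking {n : ℕ} {ι : Type*} (A : ι → Set (EuclideanSpace ℝ (Fin n)))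
    (ξ : ι → EuclideanSpace ℝ (Fin n)) (C : Set (EuclideanSpace ℝ (Fin n))) : Prop :=
  (∀ i, (fun x => ξ i + x) '' A i ⊆ C) ∧
  Pairwise fun i j =>
    interior ((fun x => ξ i + x) '' A i) ∩ interior ((fun x => ξ j + x) '' A j) = ∅

/-- There exists a translated packing of `A` into `C`. -/
def TransPacksInto {n : ℕ} {ι : Type*} (A : ι → Set (EuclideanSpace ℝ (Fin n)))
    (C : Set (EuclideanSpace ℝ (Fin n))) : Prop :=
  ∃ ξ, IsTransPacking A ξ C

open Filter Topology

/-- The translates `ξᵢ + Aᵢ` form a packing into `C`, in an arbitrary topological additive group: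
the counterpart of `IsTransPacking` outside `ℝⁿ`. The translate is encoded as `ξ i +ᵥ A i`. -/
def IsPackingByTranslates {ι E : Type*} [AddGroup E] [TopologicalSpace E] (A : ι → Set E)
    (ξ : ι → E) (C : Set E) : Prop :=
  (∀ i, ξ i +ᵥ A i ⊆ C) ∧
  Pairwise fun i j => Disjoint (interior (ξ i +ᵥ A i)) (interior (ξ j +ᵥ A j))

/-- Some choice of translation vectors packs `A` into `C`: the counterpart of `TransPacksInto`
outside `ℝⁿ`. -/
def PacksByTranslatesInto {ι E : Type*} [AddGroup E] [TopologicalSpace E] (A : ι → Set E)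
    (C : Set E) : Prop :=
  ∃ ξ, IsPackingByTranslates A ξ C

theorem transPacksInto_iff_packsByTranslatesInto {n : ℕ} {ι : Type*}
    {A : ι → Set (EuclideanSpace ℝ (Fin n))} {C : Set (EuclideanSpace ℝ (Fin n))} :
    TransPacksInto A C ↔ PacksByTranslatesInto A C := by
  simp only [PacksByTranslatesInto, IsPackingByTranslates, Set.disjoint_iff_inter_eq_empty]
  rfl

theorem exists_mem_smul_tendsto_of_eventually_mem_smul {κ M X : Type*} [TopologicalSpace M]
    [TopologicalSpace X] [SMul M X] [ContinuousSMul M X] {U : Ultrafilter κ} {r : κ → M} {r₀ : M}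
    {C : Set X} {u : κ → X} (hC : IsCompact C) (hr : Tendsto r U (𝓝 r₀))
    (hu : ∀ᶠ t in U, u t ∈ r t • C) : ∃ z ∈ r₀ • C, Tendsto u U (𝓝 z) := by
  obtain ⟨_, c₁, -, -⟩ := hu.exists
  have : Nonempty X := ⟨c₁⟩
  choose! c hc using fun t (ht : u t ∈ r t • C) => ht
  obtain ⟨c₀, hc₀, hlim⟩ := hC.ultrafilter_le_nhds (U.map c)
    (le_principal_iff.2 (hu.mono fun t ht => (hc t ht).1))
  exact ⟨r₀ • c₀, Set.smul_mem_smul_set hc₀,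
    (hr.smul hlim).congr' (hu.mono fun t ht => (hc t ht).2)⟩

section TopologicalAddGroup

variable {κ E : Type*} [AddGroup E] [TopologicalSpace E] [IsTopologicalAddGroup E]
  {S T : Set E} {a b : κ → E} {α β : E}

theorem exists_tendsto_and_vadd_subset_smul {M : Type*} [T2Space E] [TopologicalSpace M] [SMul M E]
    [ContinuousSMul M E] {U : Ultrafilter κ} {r : κ → M} {r₀ : M} {C : Set E} (hC : IsCompact C)
    (hr : Tendsto r U (𝓝 r₀)) (hsub : ∀ᶠ t in U, a t +ᵥ S ⊆ r t • C) :
    ∃ α, (S.Nonempty → Tendsto a U (𝓝 α)) ∧ α +ᵥ S ⊆ r₀ • C := by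
  have hlim : ∀ x ∈ S, ∃ z ∈ r₀ • C, Tendsto (fun t => a t + x) U (𝓝 z) := fun x hx =>
    exists_mem_smul_tendsto_of_eventually_mem_smul hC hr
      (hsub.mono fun t ht => ht (Set.vadd_mem_vadd_set hx))
  obtain rfl | ⟨x, hx⟩ := S.eq_empty_or_nonempty
  · exact ⟨0, by simp⟩
  obtain ⟨z, -, hz⟩ := hlim x hx
  have ha : Tendsto a U (𝓝 (z - x)) := by simpa using hz.sub_const x
  refine ⟨z - x, fun _ => ha, Set.vadd_set_subset_iff.2 fun y hy => ?_⟩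
  obtain ⟨w, hw, hlim_w⟩ := hlim y hy
  have hzw : z - x + y = w := tendsto_nhds_unique (ha.add_const y) hlim_w
  rwa [vadd_eq_add, hzw]

theorem eventually_mem_interior_vadd_of_tendsto {l : Filter κ} {p : E} (ha : Tendsto a l (𝓝 α))
    (hp : p ∈ interior (α +ᵥ S)) : ∀ᶠ t in l, p ∈ interior (a t +ᵥ S) := by
  simp only [interior_vadd, Set.mem_vadd_set_iff_neg_vadd_mem] at hp ⊢
  exact (ha.neg.add_const p).eventually_mem (isOpen_interior.mem_nhds hp)

theorem disjoint_interior_vadd_of_tendsto {l : Filter κ}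
    (ha : S.Nonempty → Tendsto a l (𝓝 α)) (hb : T.Nonempty → Tendsto b l (𝓝 β))
    (hdisj : ∃ᶠ t in l, Disjoint (interior (a t +ᵥ S)) (interior (b t +ᵥ T))) :
    Disjoint (interior (α +ᵥ S)) (interior (β +ᵥ T)) := by
  refine Set.disjoint_left.2 fun p hpS hpT => ?_
  have hS : S.Nonempty := Set.vadd_set_nonempty.1 ⟨p, interior_subset hpS⟩
  have hT : T.Nonempty := Set.vadd_set_nonempty.1 ⟨p, interior_subset hpT⟩
  obtain ⟨t, ht, hptS, hptT⟩ := (hdisj.and_eventually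
    ((eventually_mem_interior_vadd_of_tendsto (ha hS) hpS).and
      (eventually_mem_interior_vadd_of_tendsto (hb hT) hpT))).exists
  exact Set.disjoint_left.1 ht hptS hptT

theorem isClosed_setOf_packsByTranslatesInto_smul {ι M : Type*} [T2Space E] [TopologicalSpace M]
    [SMul M E] [ContinuousSMul M E] (A : ι → Set E) {C : Set E} (hC : IsCompact C) :
    IsClosed {r : M | PacksByTranslatesInto A (r • C)} := by
  refine isClosed_iff_ultrafilter.2 fun r₀ U hU hpacks => ?_
  choose! ξ hξ using fun r (hr : PacksByTranslatesInto A ((r : M) • C)) => hr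
  have hpack : ∀ᶠ r in U, IsPackingByTranslates A (ξ r) (r • C) := mem_of_superset hpacks hξ
  choose ζ hlim hsub using fun i =>
    exists_tendsto_and_vadd_subset_smul hC hU (hpack.mono fun r hr => hr.1 i)
  exact ⟨ζ, hsub, fun i j hij => disjoint_interior_vadd_of_tendsto (hlim i) (hlim j)
    (hpack.mono fun r hr => hr.2 hij).frequently⟩

end TopologicalAddGroup

theorem translated_packing_of_homothets_general {ι E : Type*} [AddCommGroup E] [Module ℝ E]
    [TopologicalSpace E] [IsTopologicalAddGroup E] [ContinuousSMul ℝ E] [T2Space E]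
    (A : ι → Set E) {C : Set E} (hC : IsCompact C)
    (h : ∃ᶠ ε in 𝓝 (0 : ℝ), PacksByTranslatesInto A ((1 + ε) • C)) :
    PacksByTranslatesInto A C := by
  have hone : Tendsto (fun ε : ℝ => 1 + ε) (𝓝 0) (𝓝 1) := by
    simpa using (tendsto_id (x := 𝓝 (0 : ℝ))).const_add 1
  simpa using (isClosed_setOf_packsByTranslatesInto_smul A hC).mem_of_frequently_of_tendsto h hone

/-- **Theorem 1, translated-packing version.** If `C ⊆ ℝⁿ` is compact and for every
`ε > 0` the collection `A` admits a translated packing into the homothet `(1+ε)C`,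
then `A` admits a translated packing into `C` itself. -/
theorem translated_packing_of_homothets {n : ℕ} {ι : Type*}
    (A : ι → Set (EuclideanSpace ℝ (Fin n)))
    (C : Set (EuclideanSpace ℝ (Fin n))) (hC : IsCompact C)
    (h : ∀ ε : ℝ, 0 < ε → TransPacksInto A ((1 + ε) • C)) :
    TransPacksInto A C := by
  simp only [transPacksInto_iff_packsByTranslatesInto] at h ⊢
  have hright : ∀ᶠ ε in 𝓝[>] (0 : ℝ), PacksByTranslatesInto A ((1 + ε) • C) :=
    eventually_mem_nhdsWithin.mono h
  exact translated_packing_of_homothets_general A hC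
    (hright.frequently.filter_mono nhdsWithin_le_nhds)
end
end

section
/- Let C be a closed subset of ℝⁿ and let 𝒜 = {A_1, A_2, …} be a countable collection of subsets of ℝⁿ. Then the set 𝒫(𝒜,C) of all packings of 𝒜 into C, regarded as the set of sequences S = (σ_i)_{i≥1} ∈ (O(n) × ℝⁿ)^ℕ satisfying σ_i(A_i) ⊆ C for all i and Int(σ_i(A_i)) ∩ Int(σ_j(A_j)) = ∅ for all i ≠ j, is a closed subset of the product space (O(n) × ℝⁿ)^ℕ (with the product topology, where O(n) × ℝⁿ carries its standard topology). -/
noncomputable section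

/-!
Both conditions defining a packing can be tested one point at a time. The containment
`σᵢ(Aᵢ) ⊆ C` says `σᵢ(x) ∈ C` for every `x ∈ Aᵢ`, a closed condition because `σᵢ(x)` is continuous
in `σᵢ`. Since `σᵢ` is a homeomorphism, `y ∈ Int(σᵢ(Aᵢ))` says `σᵢ⁻¹(y) ∈ Int(Aᵢ)`, an open
condition because `σᵢ⁻¹(y) = θᵢᵀ(y - ξᵢ)` is continuous in `σᵢ`. Thus the configurations in which
two given interiors overlap at a given point form an open set, and those in which no two interiors
overlap form a closed one.
-/

section ParametrizedFamilies

variable {P X Y : Type*} [TopologicalSpace P]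

lemma isClosed_setOf_image_subset [TopologicalSpace Y] {f : P → X → Y} {A : Set X} {C : Set Y}
    (hf : ∀ x ∈ A, Continuous fun p => f p x) (hC : IsClosed C) :
    IsClosed {p | f p '' A ⊆ C} := by
  simp only [Set.subset_def, Set.forall_mem_image, Set.ofPred_forall]
  exact isClosed_biInter fun x hx => hC.preimage (hf x hx)

lemma isOpen_setOf_mem_interior_image [TopologicalSpace X] [TopologicalSpace Y]
    {f : P → X ≃ₜ Y} {y : Y} (hf : Continuous fun p => (f p).symm y) (A : Set X) :
    IsOpen {p | y ∈ interior (f p '' A)} := by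
  simp only [Homeomorph.image_eq_preimage_symm, ← Homeomorph.preimage_interior, Set.mem_preimage]
  exact isOpen_interior.preimage hf

lemma isClosed_setOf_inter_eq_empty {s t : P → Set Y} (hs : ∀ y, IsOpen {p | y ∈ s p})
    (ht : ∀ y, IsOpen {p | y ∈ t p}) : IsClosed {p | s p ∩ t p = ∅} := by
  simp only [Set.eq_empty_iff_forall_notMem, Set.mem_inter_iff, Set.ofPred_forall]
  exact isClosed_iInter fun y => ((hs y).inter (ht y)).isClosed_compl

theorem packings_isClosed_general {ι : Type*} [TopologicalSpace X] [TopologicalSpace Y]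
    {f : P → X ≃ₜ Y} (hf : ∀ x, Continuous fun p => f p x)
    (hf_symm : ∀ y, Continuous fun p => (f p).symm y) {C : Set Y} (hC : IsClosed C)
    (A : ι → Set X) :
    IsClosed {σ : ι → P | (∀ i, f (σ i) '' A i ⊆ C) ∧
      Pairwise fun i j => interior (f (σ i) '' A i) ∩ interior (f (σ j) '' A j) = ∅} := by
  have isClosed_subset (i : ι) : IsClosed {σ : ι → P | f (σ i) '' A i ⊆ C} :=
    isClosed_setOf_image_subset (fun x _ => (hf x).comp (continuous_apply i)) hC
  have isOpen_mem_interior (i : ι) (y : Y) : IsOpen {σ : ι → P | y ∈ interior (f (σ i) '' A i)} :=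
    isOpen_setOf_mem_interior_image ((hf_symm y).comp (continuous_apply i)) (A i)
  simp only [Pairwise, Set.ofPred_and, Set.ofPred_forall]
  exact (isClosed_iInter isClosed_subset).inter <|
    isClosed_iInter fun i => isClosed_iInter fun j => isClosed_iInter fun _ =>
      isClosed_setOf_inter_eq_empty (isOpen_mem_interior i) (isOpen_mem_interior j)

end ParametrizedFamilies

section RigidMotion

variable {n : ℕ}

lemma rmApply_zero (θ : Matrix (Fin n) (Fin n) ℝ) (ξ : EuclideanSpace ℝ (Fin n)) :
    rmApply θ ξ 0 = ξ := by
  simp [rmApply]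

lemma rmApply_one (ξ x : EuclideanSpace ℝ (Fin n)) : rmApply 1 ξ x = ξ + x := by
  simp [rmApply]

lemma rmApply_sub_translation (θ : Matrix (Fin n) (Fin n) ℝ) (ξ x : EuclideanSpace ℝ (Fin n)) :
    rmApply θ ξ x - ξ = rmApply θ 0 x := by
  simp [rmApply]

lemma rmApply_rmApply (θ η : Matrix (Fin n) (Fin n) ℝ) (ξ ζ x : EuclideanSpace ℝ (Fin n)) :
    rmApply θ ξ (rmApply η ζ x) = rmApply (θ * η) (rmApply θ ξ ζ) x := by
  simp only [rmApply, map_add, ContinuousLinearEquiv.apply_symm_apply, Matrix.mulVec_add,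
    Matrix.mulVec_mulVec, add_assoc]

@[fun_prop]
lemma continuous_rmApply_s12 {Z : Type*} [TopologicalSpace Z] {θ : Z → Matrix (Fin n) (Fin n) ℝ}
    {ξ x : Z → EuclideanSpace ℝ (Fin n)} (hθ : Continuous θ) (hξ : Continuous ξ)
    (hx : Continuous x) : Continuous fun z => rmApply (θ z) (ξ z) (x z) := by
  unfold rmApply
  fun_prop

/-- The rigid motion of `ℝⁿ` given by `(θ, ξ) ∈ O(n) × ℝⁿ`, as a self-homeomorphism. Its inverse
`y ↦ θᵀ(y - ξ)` is written with `star θ`, which is `θᵀ` for a real matrix. -/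
def rmHomeo (σ : Matrix.orthogonalGroup (Fin n) ℝ × EuclideanSpace ℝ (Fin n)) :
    EuclideanSpace ℝ (Fin n) ≃ₜ EuclideanSpace ℝ (Fin n) where
  toFun := rmApply (σ.1 : Matrix (Fin n) (Fin n) ℝ) σ.2
  invFun y := rmApply (star (σ.1 : Matrix (Fin n) (Fin n) ℝ)) 0 (y - σ.2)
  left_inv x := by
    beta_reduce
    rw [rmApply_sub_translation, rmApply_rmApply, Matrix.UnitaryGroup.star_mul_self, rmApply_zero,
      rmApply_one, zero_add]
  right_inv y := by
    rw [rmApply_rmApply, Matrix.mem_unitaryGroup_iff.1 σ.1.2, rmApply_zero, rmApply_one,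
      add_sub_cancel]
  continuous_toFun := by fun_prop
  continuous_invFun := by fun_prop

lemma continuous_rmHomeo_apply (x : EuclideanSpace ℝ (Fin n)) :
    Continuous fun σ : Matrix.orthogonalGroup (Fin n) ℝ × EuclideanSpace ℝ (Fin n) =>
      rmHomeo σ x :=
  continuous_rmApply_s12 (by fun_prop) (by fun_prop) (by fun_prop)

lemma continuous_rmHomeo_symm_apply (y : EuclideanSpace ℝ (Fin n)) :
    Continuous fun σ : Matrix.orthogonalGroup (Fin n) ℝ × EuclideanSpace ℝ (Fin n) =>
      (rmHomeo σ).symm y :=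
  continuous_rmApply_s12 (by fun_prop) (by fun_prop) (by fun_prop)

end RigidMotion

/-- **Proposition 1.** For a closed set `C ⊆ ℝⁿ` and a countable collection
`A = {A_1, A_2, …}` of subsets of `ℝⁿ`, the set `𝒫(A, C)` of packings of `A` into `C` —
the sequences `σ = (θᵢ, ξᵢ)ᵢ ∈ (O(n) × ℝⁿ)^ℕ` with each `σᵢ(Aᵢ) ⊆ C` and the interiors of
the `σᵢ(Aᵢ)` pairwise disjoint — is a closed subset of the product space
`(O(n) × ℝⁿ)^ℕ`. -/
theorem packings_isClosed {n : ℕ} (C : Set (EuclideanSpace ℝ (Fin n))) (hC : IsClosed C)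
    (A : ℕ → Set (EuclideanSpace ℝ (Fin n))) :
    IsClosed {σ : ℕ → (Matrix.orthogonalGroup (Fin n) ℝ) × EuclideanSpace ℝ (Fin n) |
      (∀ i, rmApply ((σ i).1 : Matrix (Fin n) (Fin n) ℝ) (σ i).2 '' A i ⊆ C) ∧
      Pairwise fun i j =>
        interior (rmApply ((σ i).1 : Matrix (Fin n) (Fin n) ℝ) (σ i).2 '' A i) ∩
          interior (rmApply ((σ j).1 : Matrix (Fin n) (Fin n) ℝ) (σ j).2 '' A j) = ∅} :=
  packings_isClosed_general continuous_rmHomeo_apply continuous_rmHomeo_symm_apply hC A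
end
end

section
/- Let A be a subset of ℝⁿ containing the origin, with finite diameter diam A. Let B = [0,b_1] × ⋯ × [0,b_n] be a brick, and suppose σ = (θ,ξ) ∈ O(n) × ℝⁿ satisfies σ(A) ⊆ B. Then there exists ξ' ∈ ℝⁿ such that the rigid motion σ' = (θ,ξ') satisfies σ'(A) ⊆ [0, min{b_1, diam A}] × ⋯ × [0, min{b_n, diam A}]. -/
/-!
Translate a subset of the brick so that in each coordinate the infimum of its points becomes `0`.
The largest value of a coordinate is then at most the diameter of the projection of the set to that
axis. This projection lies in an interval of length `b m`, and projecting does not increase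
diameters, so its diameter is at most both `b m` and the diameter of the set. The theorem is the
case of the set `σ(A)`, which has the same diameter as `A` because `σ` is an isometry.
-/

noncomputable section

/-- The brick `[0, b 1] × ⋯ × [0, b n]` in `ℝⁿ`. -/
def brick0 {n : ℕ} (b : Fin n → ℝ) : Set (EuclideanSpace ℝ (Fin n)) :=
  {x | ∀ m, x m ∈ Set.Icc 0 (b m)}

open Bornology Metric Set
open scoped ENNReal Pointwise

theorem sub_sInf_mem_Icc_diam {s : Set ℝ} (hs : IsBounded s) {x : ℝ} (hx : x ∈ s) :
    x - sInf s ∈ Icc 0 (diam s) := by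
  rw [Real.diam_eq hs]
  exact ⟨sub_nonneg.2 (csInf_le hs.bddBelow hx), sub_le_sub_right (le_csSup hs.bddAbove hx) _⟩

theorem lipschitzWith_piLp_apply {ι : Type*} [Fintype ι] (p : ℝ≥0∞) [Fact (1 ≤ p)] (β : ι → Type*)
    [∀ i, PseudoEMetricSpace (β i)] (i : ι) : LipschitzWith 1 (fun x : PiLp p β => x i) := by
  simpa only [one_mul, Function.comp_def, Function.eval] using
    (LipschitzWith.eval i).comp (PiLp.lipschitzWith_ofLp p β)

theorem isBounded_brick0 {n : ℕ} (b : Fin n → ℝ) : IsBounded (brick0 b) := by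
  have preimage_box : brick0 b = WithLp.ofLp ⁻¹' Icc 0 b := by
    ext x
    simp only [brick0, mem_ofPred_eq, mem_preimage, mem_Icc, Pi.le_def, forall_and, Pi.zero_apply]
  rw [preimage_box]
  exact (PiLp.antilipschitzWith_ofLp 2 fun _ => ℝ).isBounded_preimage (isBounded_Icc 0 b)

theorem diam_image_apply_le_of_subset_brick0 {n : ℕ} {S : Set (EuclideanSpace ℝ (Fin n))}
    {b : Fin n → ℝ} (hS : S ⊆ brick0 b) (hne : S.Nonempty) (m : Fin n) :
    diam ((fun x => x m) '' S) ≤ b m := by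
  obtain ⟨x, hx⟩ := hne
  have side_nonneg : 0 ≤ b m := (hS hx m).1.trans (hS hx m).2
  calc diam ((fun x => x m) '' S)
      ≤ diam (Icc 0 (b m)) := diam_mono (image_subset_iff.2 fun _ hy => hS hy m) (isBounded_Icc _ _)
    _ = b m := by rw [Real.diam_Icc side_nonneg, sub_zero]

theorem reposition_into_small_brick_general {n : ℕ} {S : Set (EuclideanSpace ℝ (Fin n))}
    {b : Fin n → ℝ} (hS : S ⊆ brick0 b) :
    ∃ v : EuclideanSpace ℝ (Fin n), v +ᵥ S ⊆ brick0 (fun m => min (b m) (diam S)) := by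
  have bounded : IsBounded S := (isBounded_brick0 b).subset hS
  refine ⟨WithLp.toLp 2 fun m => -sInf ((fun x => x m) '' S), ?_⟩
  rintro _ ⟨x, hx, rfl⟩ m
  have proj_lipschitz : LipschitzWith 1 (fun x : EuclideanSpace ℝ (Fin n) => x m) :=
    lipschitzWith_piLp_apply 2 _ m
  have width_le : diam ((fun x => x m) '' S) ≤ min (b m) (diam S) :=
    le_min (diam_image_apply_le_of_subset_brick0 hS ⟨x, hx⟩ m) <| by
      simpa only [NNReal.coe_one, one_mul] using proj_lipschitz.diam_image_le S bounded
  have shifted_mem : x m - sInf ((fun x => x m) '' S) ∈ Icc 0 (diam ((fun x => x m) '' S)) :=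
    sub_sInf_mem_Icc_diam (proj_lipschitz.isBounded_image bounded) ⟨x, hx, rfl⟩
  simpa only [vadd_eq_add, PiLp.add_apply, neg_add_eq_sub] using
    Icc_subset_Icc_right width_le shifted_mem

theorem isometry_toEuclideanCLM_of_mem_unitaryGroup {𝕜 ι : Type*} [RCLike 𝕜] [Fintype ι]
    [DecidableEq ι] {U : Matrix ι ι 𝕜} (hU : U ∈ Matrix.unitaryGroup ι 𝕜) :
    Isometry (Matrix.toEuclideanCLM (n := ι) (𝕜 := 𝕜) U) :=
  AddMonoidHomClass.isometry_of_norm _ <|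
    ContinuousLinearMap.norm_map_of_mem_unitary (Unitary.map_mem Matrix.toEuclideanCLM hU)

theorem isometry_rmApply {n : ℕ} {θ : Matrix (Fin n) (Fin n) ℝ}
    (hθ : θ ∈ Matrix.orthogonalGroup (Fin n) ℝ) (ξ : EuclideanSpace ℝ (Fin n)) :
    Isometry (rmApply θ ξ) :=
  (isometry_vadd _ ξ).comp (isometry_toEuclideanCLM_of_mem_unitaryGroup hθ)

theorem vadd_image_rmApply {n : ℕ} (θ : Matrix (Fin n) (Fin n) ℝ)
    (v ξ : EuclideanSpace ℝ (Fin n)) (A : Set (EuclideanSpace ℝ (Fin n))) :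
    v +ᵥ rmApply θ ξ '' A = rmApply θ (v + ξ) '' A := by
  rw [← image_vadd, image_image]
  exact image_congr fun _ _ => (add_assoc v ξ _).symm

/-- **Repositioning step in Case 2 of the proof of Theorem 2.** If `A ⊆ ℝⁿ` contains the
origin and is bounded (so that its diameter is finite), and the rigid motion `σ = (θ, ξ)`
carries `A` into the brick `[0, b 1] × ⋯ × [0, b n]`, then some rigid motion
`σ' = (θ, ξ')` with the same orthogonal part carries `A` into the smaller brick
`[0, min (b 1) (diam A)] × ⋯ × [0, min (b n) (diam A)]`. -/
theorem reposition_into_small_brick {n : ℕ} (A : Set (EuclideanSpace ℝ (Fin n)))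
    (h0 : (0 : EuclideanSpace ℝ (Fin n)) ∈ A) (hA : Bornology.IsBounded A)
    (b : Fin n → ℝ)
    (θ : Matrix (Fin n) (Fin n) ℝ) (hθ : θ ∈ Matrix.orthogonalGroup (Fin n) ℝ)
    (ξ : EuclideanSpace ℝ (Fin n))
    (h : rmApply θ ξ '' A ⊆ brick0 b) :
    ∃ ξ' : EuclideanSpace ℝ (Fin n),
      rmApply θ ξ' '' A ⊆ brick0 (fun m => min (b m) (Metric.diam A)) := by
  obtain ⟨v, hv⟩ := reposition_into_small_brick_general h
  exact ⟨v + ξ, by rwa [vadd_image_rmApply, (isometry_rmApply hθ ξ).diam_image A] at hv⟩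
end
end
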